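/- arXiv:2103.15372 — 2 statements merged into one kernel-verified Lean document; each statement's English description precedes it below -/
import Mathlib

section
/- Let κ ∈ (0, 2π) and D = D^(κ). Let σ > 0, α + γ > −2, γ > −1 and β, ν ∈ ℝ. Then there exists a constant N = N(κ, α, β, γ, ν, σ) > 0 such that for every x ∈ D^(κ), ∫_{D^(κ)} |y|^α (|y| + 1)^{−β} ρ(y)^γ (ρ(y) + 1)^{−ν} e^{−σ |x − y|²} dy ≤ N (|x| + 1)^{α−β} (ρ(x) + 1)^{γ−ν}. (This is the two-dimensional case of an integral estimate on conic domains.) -/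
open MeasureTheory

/-- The planar angular (conic) domain
`D^(κ) = {(r cos η, r sin η) : r > 0, −κ/2 < η < κ/2} ⊆ ℝ²`. -/
def wedge (κ : ℝ) : Set (EuclideanSpace ℝ (Fin 2)) :=
  {x | ∃ r η : ℝ, 0 < r ∧ -(κ / 2) < η ∧ η < κ / 2 ∧
        x 0 = r * Real.cos η ∧ x 1 = r * Real.sin η}

/-- `ρ(x) = dist(x, ∂D^(κ))`, the distance to the boundary of the wedge. -/
noncomputable def wedgeDist (κ : ℝ) (x : EuclideanSpace ℝ (Fin 2)) : ℝ :=
  Metric.infDist x (frontier (wedge κ))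


lemma wedge_eq (κ : ℝ) (hκ0 : 0 < κ) (hκ2 : κ < 2 * Real.pi) :
    wedge κ = {y | ‖y‖ * Real.cos (κ / 2) < y 0} := by
  ext y
  have hn : ‖y‖ = Real.sqrt (y 0 ^ 2 + y 1 ^ 2) := by
    rw [EuclideanSpace.norm_eq]; simp [Fin.sum_univ_two]
  constructor
  · rintro ⟨r, η, hr, h1, h2, h0, h1'⟩
    have : ‖y‖ = r := by
      rw [hn, h0, h1']
      have : (r * Real.cos η) ^ 2 + (r * Real.sin η) ^ 2 = r ^ 2 := by
        linear_combination r ^ 2 * Real.sin_sq_add_cos_sq η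
      rw [this, Real.sqrt_sq hr.le]
    simp only [Set.mem_ofPred_eq]
    rw [this, h0, ← Real.cos_abs η]
    refine mul_lt_mul_of_pos_left ?_ hr
    exact Real.cos_lt_cos_of_nonneg_of_le_pi (abs_nonneg _) (by linarith) (abs_lt.2 ⟨h1, h2⟩)
  · intro h
    simp only [Set.mem_ofPred_eq] at h
    have hy : 0 < ‖y‖ := by
      rw [norm_pos_iff]; rintro rfl; simp at h
    let z : ℂ := ⟨y 0, y 1⟩
    have hz : ‖z‖ = ‖y‖ := by
      rw [hn, Complex.norm_def, Complex.normSq_apply]; congr 1; simp only [z]; ring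
    have e0 : y 0 = ‖y‖ * Real.cos z.arg := by
      rw [← hz, Complex.norm_mul_cos_arg]
    have e1 : y 1 = ‖y‖ * Real.sin z.arg := by
      rw [← hz, Complex.norm_mul_sin_arg]
    have hc : Real.cos (κ / 2) < Real.cos |z.arg| := by
      rw [Real.cos_abs]; rw [e0] at h; exact lt_of_mul_lt_mul_left h hy.le
    have ha : |z.arg| < κ / 2 := by
      by_contra hh
      push Not at hh
      have := Real.cos_le_cos_of_nonneg_of_le_pi (by linarith) (Complex.abs_arg_le_pi z) hh
      linarith
    exact ⟨‖y‖, z.arg, hy, (abs_lt.1 ha).1, (abs_lt.1 ha).2, e0, e1⟩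

lemma wedge_isOpen (κ : ℝ) (hκ0 : 0 < κ) (hκ2 : κ < 2 * Real.pi) : IsOpen (wedge κ) := by
  rw [wedge_eq κ hκ0 hκ2]
  exact isOpen_lt (by fun_prop) (by fun_prop)

lemma wedge_norm_pos (κ : ℝ) (hκ0 : 0 < κ) (hκ2 : κ < 2 * Real.pi) {y} (hy : y ∈ wedge κ) :
    0 < ‖y‖ := by
  rw [wedge_eq κ hκ0 hκ2] at hy
  rw [norm_pos_iff]; rintro rfl; simp at hy

lemma zero_mem_frontier (κ : ℝ) (hκ0 : 0 < κ) (hκ2 : κ < 2 * Real.pi) :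
    (0 : EuclideanSpace ℝ (Fin 2)) ∈ frontier (wedge κ) := by
  rw [(wedge_isOpen κ hκ0 hκ2).frontier_eq]
  refine ⟨?_, fun h => by simpa using wedge_norm_pos κ hκ0 hκ2 h⟩
  rw [Metric.mem_closure_iff]
  intro ε hε
  refine ⟨!₂[ε / 2, 0], ⟨ε / 2, 0, by linarith, by linarith, by linarith, by simp, by simp⟩, ?_⟩
  rw [dist_zero_left, EuclideanSpace.norm_eq]
  simp [Fin.sum_univ_two]
  rw [Real.sqrt_sq (by linarith)]; linarith

/-- the rotation -/
noncomputable def rot (c s : ℝ) (h : c ^ 2 + s ^ 2 = 1) :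
    EuclideanSpace ℝ (Fin 2) ≃ₗᵢ[ℝ] EuclideanSpace ℝ (Fin 2) :=
  LinearIsometry.toLinearIsometryEquiv
    { toFun := fun y => !₂[c * y 0 + s * y 1, -s * y 0 + c * y 1]
      map_add' := by intro x y; ext i; fin_cases i <;> simp <;> ring
      map_smul' := by intro x y; ext i; fin_cases i <;> simp <;> ring
      norm_map' := by
        intro y
        simp only [LinearMap.coe_mk, AddHom.coe_mk]
        rw [EuclideanSpace.norm_eq, EuclideanSpace.norm_eq]
        congr 1
        simp [Fin.sum_univ_two]
        linear_combination (y 0 ^ 2 + y 1 ^ 2) * h } rfl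

lemma rot_one (c s : ℝ) (h : c ^ 2 + s ^ 2 = 1) (y) : rot c s h y 1 = -s * y 0 + c * y 1 := rfl

lemma abs_coord_le (y : EuclideanSpace ℝ (Fin 2)) (i) : |y i| ≤ ‖y‖ := by
  simpa using PiLp.norm_apply_le y i

lemma le_wedgeDist (κ : ℝ) (hκ0 : 0 < κ) (hκ2 : κ < 2 * Real.pi) (c s : ℝ)
    (hc : c = Real.cos (κ / 2)) (h : c ^ 2 + s ^ 2 = 1) (h' : c ^ 2 + (-s) ^ 2 = 1)
    (y : EuclideanSpace ℝ (Fin 2)) :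
    |rot c s h y 1| ≤ wedgeDist κ y ∨ |rot c (-s) h' y 1| ≤ wedgeDist κ y := by
  rw [← min_le_iff]
  unfold wedgeDist
  rw [Metric.le_infDist ⟨0, zero_mem_frontier κ hκ0 hκ2⟩]
  intro z hz
  rw [wedge_eq κ hκ0 hκ2] at hz
  have hz := frontier_lt_subset_eq (by fun_prop) (by fun_prop) hz
  simp only [Set.mem_ofPred_eq, ← hc] at hz
  have hn : ‖z‖ ^ 2 = z 0 ^ 2 + z 1 ^ 2 := by
    rw [EuclideanSpace.norm_sq_eq]; simp [Fin.sum_univ_two]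
  have key : (-s * z 0 + c * z 1) * (s * z 0 + c * z 1) = 0 := by
    have : z 0 ^ 2 = (z 0 ^ 2 + z 1 ^ 2) * c ^ 2 := by rw [← hn, ← hz]; ring
    linear_combination -this - z 0 ^ 2 * h
  have gen : ∀ L : EuclideanSpace ℝ (Fin 2) ≃ₗᵢ[ℝ] EuclideanSpace ℝ (Fin 2), L z 1 = 0 →
      |L y 1| ≤ dist y z := by
    intro L hL
    have := abs_coord_le (L (y - z)) 1
    rw [L.norm_map, map_sub] at this
    simpa [hL, dist_eq_norm] using this
  rw [min_le_iff]
  rcases mul_eq_zero.1 key with h0 | h0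
  · left; apply gen; rw [rot_one]; exact h0
  · right; apply gen; rw [rot_one]; linarith

open ENNReal in
/-- singular factor -/
noncomputable def HH (t : ℝ) : ℝ≥0∞ := 1 + (ENNReal.ofReal |t|)⁻¹

lemma HH_meas : Measurable HH := by unfold HH; fun_prop

lemma HH_anti {a b : ℝ} (h : |a| ≤ |b|) : HH b ≤ HH a := by
  unfold HH; gcongr

lemma HH_eq {u : ℝ} (hu : 0 < u) : HH u = ENNReal.ofReal ((u + 1) / u) := by
  unfold HH
  rw [abs_of_pos hu, ← ENNReal.ofReal_inv_of_pos hu, ← ENNReal.ofReal_one,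
    ← ENNReal.ofReal_add zero_le_one (by positivity)]
  congr 1; field_simp

lemma oneD (τ p : ℝ) (hτ : 0 < τ) (hp0 : 0 ≤ p) (hp1 : p < 1) :
    ∃ M : ENNReal, M ≠ ⊤ ∧ ∀ s : ℝ,
      ∫⁻ t : ℝ, HH t ^ p * ENNReal.ofReal (Real.exp (-τ * (s - t) ^ 2)) ≤ M := by
  refine ⟨2 * (∫⁻ t : ℝ, ENNReal.ofReal (Real.exp (-τ * t ^ 2))) +
    ∫⁻ t in Set.Ioc (-1 : ℝ) 1, 2 * ENNReal.ofReal (|t| ^ (-p)), ?_, ?_⟩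
  · have h1 := (integrable_exp_neg_mul_sq hτ).lintegral_lt_top
    have h2 : IntervalIntegrable (fun t : ℝ => |t| ^ (-p)) volume (-1) 1 := by
      have h3 : ∀ x : ℝ, 0 < x → IntervalIntegrable (fun t : ℝ => |t| ^ (-p)) volume 0 x := by
        intro x hx
        refine (intervalIntegral.intervalIntegrable_rpow' (r := -p) (by linarith)).congr ?_
        intro t ht
        rw [Set.uIoc_of_le hx.le] at ht
        simp [abs_of_pos ht.1]
      exact intervalIntegrable_of_even (by intro x; simp) (fun x hx => h3 x hx)
    rw [intervalIntegrable_iff_integrableOn_Ioc_of_le (by norm_num)] at h2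
    have h4 := Integrable.lintegral_lt_top h2
    rw [lintegral_const_mul _ (by fun_prop)]
    exact ENNReal.add_ne_top.2 ⟨ENNReal.mul_ne_top (by simp) h1.ne, ENNReal.mul_ne_top (by simp) h4.ne⟩
  · intro s
    have hs : ∫⁻ t : ℝ, ENNReal.ofReal (Real.exp (-τ * t ^ 2)) =
        ∫⁻ t : ℝ, ENNReal.ofReal (Real.exp (-τ * (s - t) ^ 2)) :=
      (lintegral_sub_left_eq_self (fun t : ℝ => ENNReal.ofReal (Real.exp (-τ * t ^ 2))) s).symm
    rw [hs, ← lintegral_const_mul _ (by fun_prop), ← lintegral_indicator measurableSet_Ioc,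
      ← lintegral_add_left (by fun_prop)]
    have h0 : ∀ᵐ t : ℝ, t ≠ 0 := by simp [ae_iff]
    refine lintegral_mono_ae ?_
    filter_upwards [h0] with t ht
    have htp : 0 < |t| := abs_pos.2 ht
    have hH : HH t = ENNReal.ofReal ((|t| + 1) / |t|) := by
      rw [← HH_eq htp]; unfold HH; simp
    have h2p : (2 : ℝ) ^ p ≤ 2 := by
      simpa using Real.rpow_le_rpow_of_exponent_le (x := 2) (by norm_num) hp1.le
    rw [hH, ENNReal.ofReal_rpow_of_nonneg (by positivity) hp0]
    by_cases h1 : t ∈ Set.Ioc (-1 : ℝ) 1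
    · refine le_trans ?_ le_add_self
      rw [Set.indicator_of_mem h1]
      have h1' : |t| ≤ 1 := abs_le.2 ⟨h1.1.le, h1.2⟩
      have e1 : ENNReal.ofReal (Real.exp (-τ * (s - t) ^ 2)) ≤ 1 := by
        rw [← ENNReal.ofReal_one]
        apply ENNReal.ofReal_le_ofReal
        rw [Real.exp_le_one_iff]
        nlinarith [sq_nonneg (s - t)]
      refine (mul_le_mul_right e1 _).trans ?_
      rw [mul_one, ← ENNReal.ofReal_ofNat, ← ENNReal.ofReal_mul (by norm_num)]
      apply ENNReal.ofReal_le_ofReal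
      calc ((|t| + 1) / |t|) ^ p ≤ (2 * |t|⁻¹) ^ p := by
            apply Real.rpow_le_rpow (by positivity) _ hp0
            rw [div_eq_mul_inv]; gcongr; linarith
        _ = 2 ^ p * |t| ^ (-p) := by
            rw [Real.mul_rpow (by norm_num) (by positivity), Real.inv_rpow htp.le,
              Real.rpow_neg htp.le]
        _ ≤ _ := by gcongr
    · refine le_trans ?_ le_self_add
      have h1' : 1 ≤ |t| := by
        by_contra hh
        push Not at hh
        exact h1 ⟨(abs_lt.1 hh).1, (abs_lt.1 hh).2.le⟩
      gcongr
      rw [← ENNReal.ofReal_ofNat]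
      apply ENNReal.ofReal_le_ofReal
      refine le_trans (Real.rpow_le_rpow (by positivity) ?_ hp0) h2p
      rw [div_le_iff₀ htp]; linarith

lemma twoD (τ p q : ℝ) (hτ : 0 < τ) (hp0 : 0 ≤ p) (hp1 : p < 1) (hq0 : 0 ≤ q) (hq1 : q < 1) :
    ∃ M : ENNReal, M ≠ ⊤ ∧
      ∀ (L : EuclideanSpace ℝ (Fin 2) ≃ₗᵢ[ℝ] EuclideanSpace ℝ (Fin 2))
        (x : EuclideanSpace ℝ (Fin 2)),
      ∫⁻ y, HH (L y 0) ^ p * HH (L y 1) ^ q * ENNReal.ofReal (Real.exp (-τ * ‖x - y‖ ^ 2)) ≤ M := by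
  obtain ⟨M1, h1, H1⟩ := oneD τ p hτ hp0 hp1
  obtain ⟨M2, h2, H2⟩ := oneD τ q hτ hq0 hq1
  refine ⟨M1 * M2, ENNReal.mul_ne_top h1 h2, ?_⟩
  intro L x
  have hHm := HH_meas
  set f : ℝ → ENNReal := fun t => HH t ^ p * ENNReal.ofReal (Real.exp (-τ * (L x 0 - t) ^ 2))
  set g : ℝ → ENNReal := fun t => HH t ^ q * ENNReal.ofReal (Real.exp (-τ * (L x 1 - t) ^ 2))
  have hf : Measurable f := by fun_prop
  have hg : Measurable g := by fun_prop
  have e1 : ∀ y, HH (L y 0) ^ p * HH (L y 1) ^ q * ENNReal.ofReal (Real.exp (-τ * ‖x - y‖ ^ 2))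
      = (fun z : EuclideanSpace ℝ (Fin 2) => f (z 0) * g (z 1)) (L y) := by
    intro y
    have : ‖x - y‖ ^ 2 = (L x 0 - L y 0) ^ 2 + (L x 1 - L y 1) ^ 2 := by
      rw [← L.norm_map, map_sub, EuclideanSpace.norm_sq_eq]; simp [Fin.sum_univ_two]
    simp only [f, g]
    rw [this, mul_add, Real.exp_add, ENNReal.ofReal_mul (Real.exp_nonneg _)]
    ring
  simp_rw [e1]
  rw [L.measurePreserving.lintegral_comp (f := fun z : EuclideanSpace ℝ (Fin 2) => f (z 0) * g (z 1))
    (by fun_prop)]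
  have e2 := (EuclideanSpace.volume_preserving_symm_measurableEquiv_toLp (Fin 2)).lintegral_comp
    (f := fun z : Fin 2 → ℝ => f (z 0) * g (z 1)) (by fun_prop)
  have e3 := (volume_preserving_finTwoArrow ℝ).lintegral_comp
    (f := fun z : ℝ × ℝ => f z.1 * g z.2) (by fun_prop)
  calc _ = _ := e2
    _ = _ := e3
    _ = (∫⁻ t, f t) * ∫⁻ t, g t := lintegral_prod_mul hf.aemeasurable hg.aemeasurable
    _ ≤ _ := by gcongr; exacts [H1 _, H2 _]

lemma peetre (a b t m : ℝ) (ha : 0 ≤ a) (hb : 0 ≤ b) (h : |a - b| ≤ t) :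
    (a + 1) ^ m ≤ (b + 1) ^ m * Real.exp (|m| * t) := by
  have ht : 0 ≤ t := (abs_nonneg _).trans h
  have h1 := abs_le.1 h
  have he := Real.add_one_le_exp t
  have gen : ∀ u v : ℝ, 0 ≤ u → 0 ≤ v → u ≤ v + t → u + 1 ≤ (v + 1) * Real.exp t := by
    intro u v hu hv huv
    nlinarith
  rcases le_total 0 m with hm | hm
  · rw [abs_of_nonneg hm, mul_comm m t, Real.exp_mul, ← Real.mul_rpow (by positivity) (by positivity)]
    exact Real.rpow_le_rpow (by positivity) (gen a b ha hb (by linarith)) hm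
  · have := gen b a hb ha (by linarith)
    have e : Real.exp (|m| * t) = (Real.exp (-t)) ^ m := by
      rw [← Real.exp_mul, abs_of_nonpos hm]; ring_nf
    rw [e, ← Real.mul_rpow (by positivity) (by positivity)]
    refine Real.rpow_le_rpow_of_nonpos (by positivity) ?_ hm
    rw [Real.exp_neg, ← div_eq_mul_inv, div_le_iff₀ (Real.exp_pos _)]
    exact this

lemma ofReal_split {u p q : ℝ} (hu : 0 < u) (hp : 0 ≤ p) (hq : 0 ≤ q) :
    ENNReal.ofReal (((u + 1) / u) ^ (p + q)) = HH u ^ p * HH u ^ q := by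
  rw [← ENNReal.rpow_add_of_nonneg p q hp hq, HH_eq hu,
    ENNReal.ofReal_rpow_of_nonneg (by positivity) (by positivity)]

lemma div_rpow_neg' (u m : ℝ) (hu : 0 < u) : (u / (u + 1)) ^ m = ((u + 1) / u) ^ (-m) := by
  rw [Real.rpow_neg (by positivity), ← Real.inv_rpow (by positivity), inv_div]

lemma ratio_rpow_le (u m k : ℝ) (hu : 0 < u) (h : -m ≤ k) :
    (u / (u + 1)) ^ m ≤ ((u + 1) / u) ^ k := by
  rw [div_rpow_neg' u m hu]
  apply Real.rpow_le_rpow_of_exponent_le _ h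
  rw [le_div_iff₀ hu]; linarith

lemma pointwise (α γ : ℝ) (hαγ : -2 < α + γ) (hγ : -1 < γ) :
    ∃ p q : ℝ, 0 ≤ p ∧ p < 1 ∧ 0 ≤ q ∧ q < 1 ∧ ∀ u ρ e d e' d' : ℝ, 0 < u → 0 ≤ ρ → ρ ≤ u →
      |e| ≤ u → |d| ≤ u → |e'| ≤ u → |d'| ≤ u → (|d| ≤ ρ ∨ |d'| ≤ ρ) →
      ENNReal.ofReal ((u / (u + 1)) ^ α * (ρ / (ρ + 1)) ^ γ) ≤
        HH e ^ p * HH d ^ q + HH e' ^ p * HH d' ^ q := by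
  have anti : ∀ {a b : ℝ}, 0 ≤ b → |a| ≤ b → HH b ≤ HH a := by
    intro a b hb h; exact HH_anti (by rwa [abs_of_nonneg hb])
  rcases le_or_gt 0 γ with hg | hg
  · refine ⟨max (-(α + γ) / 2) 0, max (-(α + γ) / 2) 0, le_max_right _ _, ?_, le_max_right _ _, ?_, ?_⟩
    · apply max_lt <;> linarith
    · apply max_lt <;> linarith
    intro u ρ e d e' d' hu hρ hρu he hd he' hd' _
    set P := max (-(α + γ) / 2) 0
    have hP0 : 0 ≤ P := le_max_right _ _
    have hP1 : -(α + γ) / 2 ≤ P := le_max_left _ _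
    refine le_trans ?_ (le_self_add (a := HH e ^ P * HH d ^ P))
    calc _ ≤ ENNReal.ofReal (((u + 1) / u) ^ (P + P)) := by
          apply ENNReal.ofReal_le_ofReal
          calc _ ≤ (u / (u + 1)) ^ α * (u / (u + 1)) ^ γ := by
                gcongr ?_ * ?_
                apply Real.rpow_le_rpow (by positivity) _ hg
                rw [div_le_div_iff₀ (by positivity) (by positivity)]; nlinarith
            _ = (u / (u + 1)) ^ (α + γ) := (Real.rpow_add (by positivity) _ _).symm
            _ ≤ _ := ratio_rpow_le _ _ _ hu (by linarith)
      _ = HH u ^ P * HH u ^ P := ofReal_split hu hP0 hP0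
      _ ≤ _ := by
        gcongr
        · exact anti hu.le he
        · exact anti hu.le hd
  · obtain ⟨a, ha⟩ : ∃ a, a = max (-α) 0 := ⟨_, rfl⟩
    have ha0 : 0 ≤ a := ha ▸ le_max_right _ _
    have ha1 : -α ≤ a := ha ▸ le_max_left _ _
    have ha2 : a - γ < 2 := by
      have : a < 2 + γ := ha ▸ max_lt (by linarith) (by linarith)
      linarith
    obtain ⟨p, b, hp0, hp1, hb0, hb1, hab⟩ : ∃ p b : ℝ, 0 ≤ p ∧ p < 1 ∧ 0 ≤ b ∧ b - γ < 1 ∧ a = p + b := by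
      rcases le_total a (-γ) with h | h
      · exact ⟨a, 0, ha0, by linarith, le_rfl, by linarith, by ring⟩
      · exact ⟨(a - γ) / 2, (a + γ) / 2, by linarith, by linarith, by linarith, by linarith, by ring⟩
    refine ⟨p, b + -γ, hp0, hp1, by linarith, by linarith, ?_⟩
    intro u ρ e d e' d' hu hρ hρu he hd he' hd' hor
    rcases hρ.eq_or_lt with h0 | hρ
    · rw [← h0]; simp [Real.zero_rpow hg.ne]
    have main : ∀ e d : ℝ, |e| ≤ u → |d| ≤ u → |d| ≤ ρ →
        ENNReal.ofReal ((u / (u + 1)) ^ α * (ρ / (ρ + 1)) ^ γ) ≤ HH e ^ p * HH d ^ (b + -γ) := by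
      intro e d he hd hdρ
      calc _ ≤ ENNReal.ofReal (((u + 1) / u) ^ (p + b) * ((ρ + 1) / ρ) ^ (-γ + 0)) := by
            apply ENNReal.ofReal_le_ofReal
            gcongr
            · exact ratio_rpow_le _ _ _ hu (by linarith)
            · exact ratio_rpow_le _ _ _ hρ (by linarith)
        _ = HH u ^ p * HH u ^ b * HH ρ ^ (-γ) := by
            rw [ENNReal.ofReal_mul (by positivity), ofReal_split hu hp0 hb0,
              ofReal_split hρ (by linarith) le_rfl]; simp
        _ ≤ HH e ^ p * HH d ^ b * HH d ^ (-γ) := by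
            have h1 := anti hu.le he
            have h2 := anti hu.le hd
            have h3 := anti hρ.le hdρ
            have : 0 ≤ -γ := by linarith
            gcongr
        _ = _ := by
            rw [ENNReal.rpow_add_of_nonneg _ _ hb0 (by linarith), mul_assoc]
    rcases hor with h | h
    · exact (main e d he hd h).trans le_self_add
    · exact (main e' d' he' hd' h).trans le_add_self

/-- Let `κ ∈ (0, 2π)`, `σ > 0`, `α + γ > −2`, `γ > −1`, `β, ν ∈ ℝ`.
Then there is `N = N(κ, α, β, γ, ν, σ) > 0` such that for every `x ∈ D^(κ)`,
`∫_{D^(κ)} |y|^α (|y|+1)^(−β) ρ(y)^γ (ρ(y)+1)^(−ν) e^(−σ|x−y|²) dy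
  ≤ N (|x|+1)^(α−β) (ρ(x)+1)^(γ−ν)`. -/
theorem stmt_1 (κ : ℝ) (hκ0 : 0 < κ) (hκ2 : κ < 2 * Real.pi)
    (σ α β γ ν : ℝ) (hσ : 0 < σ) (hαγ : -2 < α + γ) (hγ : -1 < γ) :
    ∃ N : ℝ, 0 < N ∧ ∀ x ∈ wedge κ,
      (∫⁻ y in wedge κ,
          ENNReal.ofReal
            (‖y‖ ^ α * (‖y‖ + 1) ^ (-β) * wedgeDist κ y ^ γ * (wedgeDist κ y + 1) ^ (-ν) *
              Real.exp (-σ * ‖x - y‖ ^ 2)))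
        ≤ ENNReal.ofReal (N * (‖x‖ + 1) ^ (α - β) * (wedgeDist κ x + 1) ^ (γ - ν)) := by
  obtain ⟨p, q, hp0, hp1, hq0, hq1, hpt⟩ := pointwise α γ hαγ hγ
  obtain ⟨M, hM, H⟩ := twoD (σ / 2) p q (by linarith) hp0 hp1 hq0 hq1
  obtain ⟨A, hA⟩ : ∃ A, A = |α - β| + |γ - ν| := ⟨_, rfl⟩
  obtain ⟨C, hC⟩ : ∃ C, C = Real.exp (A ^ 2 / (2 * σ)) := ⟨_, rfl⟩
  have hC0 : 0 < C := hC ▸ Real.exp_pos _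
  have hcs : Real.cos (κ / 2) ^ 2 + Real.sin (κ / 2) ^ 2 = 1 := Real.cos_sq_add_sin_sq _
  have hcs' : Real.cos (κ / 2) ^ 2 + (-Real.sin (κ / 2)) ^ 2 = 1 := by rw [neg_sq]; exact hcs
  set L := rot _ _ hcs
  set L' := rot _ _ hcs'
  have hHm := HH_meas
  have hd0 : ∀ y, 0 ≤ wedgeDist κ y := fun y => Metric.infDist_nonneg
  refine ⟨C * (2 * M.toReal + 1), by positivity, ?_⟩
  intro x hx
  obtain ⟨K, hK⟩ : ∃ K, K = (‖x‖ + 1) ^ (α - β) * (wedgeDist κ x + 1) ^ (γ - ν) := ⟨_, rfl⟩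
  have hK0 : 0 ≤ K := by rw [hK]; have := hd0 x; positivity
  have key : ∀ y ∈ wedge κ, ENNReal.ofReal
            (‖y‖ ^ α * (‖y‖ + 1) ^ (-β) * wedgeDist κ y ^ γ * (wedgeDist κ y + 1) ^ (-ν) *
              Real.exp (-σ * ‖x - y‖ ^ 2)) ≤
      ENNReal.ofReal (C * K) * (HH (L y 0) ^ p * HH (L y 1) ^ q *
          ENNReal.ofReal (Real.exp (-(σ / 2) * ‖x - y‖ ^ 2)) +
        HH (L' y 0) ^ p * HH (L' y 1) ^ q *
          ENNReal.ofReal (Real.exp (-(σ / 2) * ‖x - y‖ ^ 2))) := by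
    intro y hy
    have hu := wedge_norm_pos κ hκ0 hκ2 hy
    have hρu : wedgeDist κ y ≤ ‖y‖ := by
      have := Metric.infDist_le_dist_of_mem (x := y) (zero_mem_frontier κ hκ0 hκ2)
      rwa [dist_zero_right] at this
    have hP := hpt ‖y‖ (wedgeDist κ y) (L y 0) (L y 1) (L' y 0) (L' y 1) hu (hd0 y) hρu
      (by simpa using abs_coord_le (L y) 0) (by simpa using abs_coord_le (L y) 1)
      (by simpa using abs_coord_le (L' y) 0) (by simpa using abs_coord_le (L' y) 1)
      (le_wedgeDist κ hκ0 hκ2 _ _ rfl hcs hcs' y)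
    rw [← add_mul]
    refine le_trans ?_ (mul_le_mul_right (mul_le_mul_left hP _) _)
    have hρ := hd0 y
    have hρx := hd0 x
    set ρ := wedgeDist κ y
    set u := ‖y‖
    rw [← ENNReal.ofReal_mul (by positivity), ← ENNReal.ofReal_mul (by positivity)]
    apply ENNReal.ofReal_le_ofReal
    set t := ‖x - y‖
    have ht : 0 ≤ t := norm_nonneg _
    have p1 : (u + 1) ^ (α - β) ≤ (‖x‖ + 1) ^ (α - β) * Real.exp (|α - β| * t) := by
      refine peetre _ _ _ _ hu.le (norm_nonneg _) ?_
      rw [abs_sub_comm]; exact abs_norm_sub_norm_le x y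
    have p2 : (ρ + 1) ^ (γ - ν) ≤ (wedgeDist κ x + 1) ^ (γ - ν) * Real.exp (|γ - ν| * t) := by
      refine peetre _ _ _ _ hρ hρx ?_
      have h1 : wedgeDist κ x ≤ ρ + dist x y := Metric.infDist_le_infDist_add_dist
      have h2 : ρ ≤ wedgeDist κ x + dist y x := Metric.infDist_le_infDist_add_dist
      rw [dist_comm] at h2
      rw [dist_eq_norm] at h1 h2
      exact abs_le.2 ⟨by linarith, by linarith⟩
    have e1 : u ^ α * (u + 1) ^ (-β) = (u + 1) ^ (α - β) * (u / (u + 1)) ^ α := by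
      rw [Real.div_rpow hu.le (by positivity), sub_eq_add_neg, Real.rpow_add (by positivity)]
      have : (u + 1) ^ α ≠ 0 := by positivity
      field_simp
    have e2 : ρ ^ γ * (ρ + 1) ^ (-ν) = (ρ + 1) ^ (γ - ν) * (ρ / (ρ + 1)) ^ γ := by
      rw [Real.div_rpow hρ (by positivity), sub_eq_add_neg, Real.rpow_add (by positivity)]
      have : (ρ + 1) ^ γ ≠ 0 := by positivity
      field_simp
    have e3 : Real.exp (|α - β| * t) * Real.exp (|γ - ν| * t) * Real.exp (-σ * t ^ 2) ≤
        C * Real.exp (-(σ / 2) * t ^ 2) := by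
      rw [hC, ← Real.exp_add, ← Real.exp_add, ← Real.exp_add, Real.exp_le_exp, ← add_mul, ← hA]
      have : A ^ 2 / (2 * σ) + σ / 2 * t ^ 2 - A * t = (A - σ * t) ^ 2 / (2 * σ) := by
        field_simp; ring
      have : 0 ≤ (A - σ * t) ^ 2 / (2 * σ) := by positivity
      linarith
    set G := (u / (u + 1)) ^ α * (ρ / (ρ + 1)) ^ γ with hG
    have hG0 : 0 ≤ G := by positivity
    calc _ = (u ^ α * (u + 1) ^ (-β)) * (ρ ^ γ * (ρ + 1) ^ (-ν)) * Real.exp (-σ * t ^ 2) := by ring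
      _ = (u + 1) ^ (α - β) * (ρ + 1) ^ (γ - ν) * G * Real.exp (-σ * t ^ 2) := by
          rw [e1, e2, hG]; ring
      _ ≤ ((‖x‖ + 1) ^ (α - β) * Real.exp (|α - β| * t)) *
          ((wedgeDist κ x + 1) ^ (γ - ν) * Real.exp (|γ - ν| * t)) * G * Real.exp (-σ * t ^ 2) := by
          gcongr
      _ = K * G * (Real.exp (|α - β| * t) * Real.exp (|γ - ν| * t) * Real.exp (-σ * t ^ 2)) := by
          rw [hK]; ring
      _ ≤ K * G * (C * Real.exp (-(σ / 2) * t ^ 2)) := by gcongr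
      _ = _ := by ring
  calc _ ≤ ∫⁻ y in wedge κ, ENNReal.ofReal (C * K) * (HH (L y 0) ^ p * HH (L y 1) ^ q *
          ENNReal.ofReal (Real.exp (-(σ / 2) * ‖x - y‖ ^ 2)) +
        HH (L' y 0) ^ p * HH (L' y 1) ^ q *
          ENNReal.ofReal (Real.exp (-(σ / 2) * ‖x - y‖ ^ 2))) :=
        setLIntegral_mono' (wedge_isOpen κ hκ0 hκ2).measurableSet key
    _ ≤ ∫⁻ y, ENNReal.ofReal (C * K) * (HH (L y 0) ^ p * HH (L y 1) ^ q *
          ENNReal.ofReal (Real.exp (-(σ / 2) * ‖x - y‖ ^ 2)) +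
        HH (L' y 0) ^ p * HH (L' y 1) ^ q *
          ENNReal.ofReal (Real.exp (-(σ / 2) * ‖x - y‖ ^ 2))) := setLIntegral_le_lintegral _ _
    _ ≤ ENNReal.ofReal (C * K) * (M + M) := by
        rw [lintegral_const_mul' _ _ ENNReal.ofReal_ne_top]
        gcongr
        rw [lintegral_add_left]
        · exact add_le_add (H L x) (H L' x)
        · have := L.continuous.measurable
          fun_prop
    _ ≤ _ := by
        rw [← ENNReal.ofReal_toReal hM, ← ENNReal.ofReal_add (by positivity) (by positivity),
          ← ENNReal.ofReal_mul (by positivity)]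
        apply ENNReal.ofReal_le_ofReal
        rw [ENNReal.toReal_ofReal (by positivity), mul_assoc (C * _), ← hK]
        have : 0 ≤ C * K := by positivity
        nlinarith
end

section
/- (Boundary decay of caloric functions on planar wedges; the critical exponent for the heat operator on D^(κ) is π/κ.) Let κ ∈ (0, 2π), D = D^(κ) ⊂ ℝ², and let λ satisfy 0 < λ < π/κ. Then there exists a constant K₀ = K₀(κ, λ) > 0 with the following property. Let R > 0, t₀ ∈ ℝ, and let v : ℝ × ℝ² → ℝ be a function such that: (a) v is continuous on (t₀ − R², t₀] × ( closure(D) ∩ B_R(0) ); (b) for every (t, x) ∈ (t₀ − R², t₀] × (D ∩ B_R(0)) the time derivative ∂_t v(t,x) and the spatial second derivatives of v exist and ∂_t v(t,x) = Δ_x v(t,x); (c) v(t, x) = 0 for all t ∈ (t₀ − R², t₀] and x ∈ ∂D ∩ B_R(0); (d) for every r ∈ (0, R), sup_{t ∈ (t₀ − r², t₀]} ∫_{D ∩ B_r(0)} v(t, x)² dx < ∞ and ∫_{t₀ − r²}^{t₀} ∫_{D ∩ B_r(0)} |∇_x v(t,x)|² dx dt < ∞. Then for every (t, x) ∈ (t₀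 − R²/4, t₀] × (D ∩ B_{R/2}(0)), |v(t, x)| ≤ K₀ (|x|/R)^λ · sup { |v(s, y)| : s ∈ (t₀ − 9R²/16, t₀], y ∈ D ∩ B_{3R/4}(0) }. -/
open MeasureTheory

open Set Filter Topology

/-- polar point -/
noncomputable def polarPt (a θ : ℝ) : EuclideanSpace ℝ (Fin 2) :=
  (a * Real.cos θ) • EuclideanSpace.single 0 1 + (a * Real.sin θ) • EuclideanSpace.single 1 1

lemma polarPt_zero (a θ : ℝ) : polarPt a θ 0 = a * Real.cos θ := by
  simp [polarPt]

lemma polarPt_one (a θ : ℝ) : polarPt a θ 1 = a * Real.sin θ := by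
  simp [polarPt]

lemma norm_polarPt (a θ : ℝ) (ha : 0 ≤ a) : ‖polarPt a θ‖ = a := by
  rw [EuclideanSpace.norm_eq, Fin.sum_univ_two, polarPt_zero, polarPt_one]
  rw [Real.norm_eq_abs, Real.norm_eq_abs, sq_abs, sq_abs]
  have : (a * Real.cos θ) ^ 2 + (a * Real.sin θ) ^ 2 = a ^ 2 := by
    nlinarith [Real.sin_sq_add_cos_sq θ]
  rw [this, Real.sqrt_sq ha]

lemma continuous_polarPt : Continuous (fun q : ℝ × ℝ => polarPt q.1 q.2) := by
  unfold polarPt; fun_prop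

lemma polarPt_mem_wedge {κ a θ : ℝ} (ha : 0 < a) (h1 : -(κ / 2) < θ) (h2 : θ < κ / 2) :
    polarPt a θ ∈ wedge κ :=
  ⟨a, θ, ha, h1, h2, polarPt_zero a θ, polarPt_one a θ⟩

lemma polarPt_mem_closure {κ a θ : ℝ} (hκ : 0 < κ) (ha : 0 ≤ a) (h1 : -(κ / 2) ≤ θ)
    (h2 : θ ≤ κ / 2) : polarPt a θ ∈ closure (wedge κ) := by
  have hm : MapsTo (fun q : ℝ × ℝ => polarPt q.1 q.2)
      (Ioi (0:ℝ) ×ˢ Ioo (-(κ / 2)) (κ / 2)) (wedge κ) := by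
    rintro ⟨b, η⟩ ⟨hb, hη⟩
    exact polarPt_mem_wedge hb hη.1 hη.2
  have := hm.closure continuous_polarPt
  rw [closure_prod_eq, closure_Ioi, closure_Ioo (by linarith)] at this
  exact this (show (a, θ) ∈ _ from ⟨ha, h1, h2⟩)

lemma polarPt_mem_frontier {κ a θ : ℝ} (hκ : 0 < κ) (hκ2 : κ < 2 * Real.pi) (ha : 0 ≤ a)
    (h1 : -(κ / 2) ≤ θ) (h2 : θ ≤ κ / 2) (h : a = 0 ∨ θ = -(κ / 2) ∨ θ = κ / 2) :
    polarPt a θ ∈ frontier (wedge κ) := by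
  refine ⟨polarPt_mem_closure hκ ha h1 h2, fun hi => ?_⟩
  obtain ⟨b, η, hb, hη1, hη2, e0, e1⟩ := interior_subset hi
  rw [polarPt_zero] at e0
  rw [polarPt_one] at e1
  have hab : a = b := by
    have : a ^ 2 = b ^ 2 := by
      have : (a * Real.cos θ) ^ 2 + (a * Real.sin θ) ^ 2
        = (b * Real.cos η) ^ 2 + (b * Real.sin η) ^ 2 := by rw [e0, e1]
      nlinarith [Real.sin_sq_add_cos_sq θ, Real.sin_sq_add_cos_sq η]
    nlinarith
  subst hab
  have hc := mul_left_cancel₀ hb.ne' e0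
  have hk : Real.cos (κ / 2) = Real.cos |η| := by
    rw [Real.cos_abs, ← hc]
    rcases h with h | h | h
    · exact absurd h hb.ne'
    · rw [h, Real.cos_neg]
    · rw [h]
  have hη : |η| < κ / 2 := abs_lt.2 ⟨hη1, hη2⟩
  have := Real.injOn_cos ⟨by linarith, by linarith⟩ ⟨abs_nonneg η, by linarith⟩ hk
  linarith

/-- One-sided data of a polar function at a point. -/
structure PolarJet (V : ℝ → ℝ → ℝ → ℝ) (s r θ vs vr vrr vθθ : ℝ) : Prop where
  ds : HasDerivAt (fun s' => V s' r θ) vs s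
  dr : ∃ V1 : ℝ → ℝ, (∀ᶠ r' in 𝓝 r, HasDerivAt (fun r'' => V s r'' θ) (V1 r') r') ∧
    HasDerivAt V1 vrr r ∧ V1 r = vr
  dθ : ∃ V2 : ℝ → ℝ, (∀ᶠ θ' in 𝓝 θ, HasDerivAt (fun θ'' => V s r θ'') (V2 θ') θ') ∧
    HasDerivAt V2 vθθ θ

lemma second_deriv_nonpos {f f' : ℝ → ℝ} {x f'' : ℝ} (h : ∀ᶠ y in 𝓝 x, HasDerivAt f (f' y) y)
    (h2 : HasDerivAt f' f'' x) (hm : IsLocalMax f x) : f' x = 0 ∧ f'' ≤ 0 := by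
  have h0 : f' x = 0 := hm.hasDerivAt_eq_zero h.self_of_nhds
  refine ⟨h0, ?_⟩
  by_contra hc
  push Not at hc
  have hd : deriv f =ᶠ[𝓝 x] f' := h.mono fun y hy => hy.deriv
  have hdd : deriv (deriv f) x = f'' := by rw [hd.deriv_eq, h2.deriv]
  have hmin : IsLocalMin f x := isLocalMin_of_deriv_deriv_pos (by rw [hdd]; exact hc)
    (by rw [hd.self_of_nhds, h0]) h.self_of_nhds.continuousAt
  have hconst : f =ᶠ[𝓝 x] fun _ => f x := by
    filter_upwards [hmin, hm] with y h1 h2 using le_antisymm h2 h1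
  have hd0 : deriv f =ᶠ[𝓝 x] fun _ => 0 := by
    have := hconst.deriv
    simpa using this
  have := hd0.deriv_eq
  rw [hdd] at this
  simp at this
  linarith

lemma PolarJet.sub {V W : ℝ → ℝ → ℝ → ℝ} {s r θ a b c d a' b' c' d' : ℝ}
    (h : PolarJet V s r θ a b c d) (h' : PolarJet W s r θ a' b' c' d') :
    PolarJet (fun s r θ => V s r θ - W s r θ) s r θ (a - a') (b - b') (c - c') (d - d') := by
  obtain ⟨hs, ⟨V1, h1, h2, h3⟩, ⟨V2, h4, h5⟩⟩ := h
  obtain ⟨ks, ⟨W1, k1, k2, k3⟩, ⟨W2, k4, k5⟩⟩ := h'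
  refine ⟨hs.sub ks, ⟨fun x => V1 x - W1 x, ?_, h2.sub k2, by simp only [h3, k3]⟩,
    ⟨fun x => V2 x - W2 x, ?_, h5.sub k5⟩⟩
  · filter_upwards [h1, k1] with y e1 e2 using e1.sub e2
  · filter_upwards [h4, k4] with y e1 e2 using e1.sub e2

lemma PolarJet.const_mul {V : ℝ → ℝ → ℝ → ℝ} {s r θ a b c d : ℝ} (C : ℝ)
    (h : PolarJet V s r θ a b c d) :
    PolarJet (fun s r θ => C * V s r θ) s r θ (C * a) (C * b) (C * c) (C * d) := by
  obtain ⟨hs, ⟨V1, h1, h2, h3⟩, ⟨V2, h4, h5⟩⟩ := h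
  refine ⟨hs.const_mul C, ⟨fun x => C * V1 x, ?_, h2.const_mul C, by simp only [h3]⟩,
    ⟨fun x => C * V2 x, ?_, h5.const_mul C⟩⟩
  · filter_upwards [h1] with y e1 using e1.const_mul C
  · filter_upwards [h4] with y e1 using e1.const_mul C

/-- comparison principle in polar coordinates -/
lemma polar_comparison (s0 s1 ρ k : ℝ) (V W : ℝ → ℝ → ℝ → ℝ)
    (hV : ContinuousOn (fun q : ℝ × ℝ × ℝ => V q.1 q.2.1 q.2.2)
      (Icc s0 s1 ×ˢ (Icc 0 ρ ×ˢ Icc (-k) k)))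
    (hW : ContinuousOn (fun q : ℝ × ℝ × ℝ => W q.1 q.2.1 q.2.2)
      (Icc s0 s1 ×ˢ (Icc 0 ρ ×ˢ Icc (-k) k)))
    (hbd : ∀ s ∈ Icc s0 s1, ∀ r ∈ Icc 0 ρ, ∀ θ ∈ Icc (-k) k,
      (s = s0 ∨ r = 0 ∨ r = ρ ∨ θ = -k ∨ θ = k) → V s r θ ≤ W s r θ)
    (hjV : ∀ s ∈ Ioc s0 s1, ∀ r ∈ Ioo 0 ρ, ∀ θ ∈ Ioo (-k) k,
      ∃ a b c d, PolarJet V s r θ a b c d ∧ a = c + b / r + d / r ^ 2)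
    (hjW : ∀ s ∈ Ioc s0 s1, ∀ r ∈ Ioo 0 ρ, ∀ θ ∈ Ioo (-k) k,
      ∃ a b c d, PolarJet W s r θ a b c d ∧ c + b / r + d / r ^ 2 < a) :
    ∀ s ∈ Icc s0 s1, ∀ r ∈ Icc 0 ρ, ∀ θ ∈ Icc (-k) k, V s r θ ≤ W s r θ := by
  intro s hs r hr θ hθ
  have hK : IsCompact (Icc s0 s1 ×ˢ (Icc 0 ρ ×ˢ Icc (-k) k)) :=
    isCompact_Icc.prod (isCompact_Icc.prod isCompact_Icc)
  obtain ⟨⟨s', r', θ'⟩, ⟨hs', hr', hθ'⟩, hmax⟩ :=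
    hK.exists_isMaxOn ⟨(s, r, θ), hs, hr, hθ⟩ (hV.sub hW)
  simp only at hs' hr' hθ'
  have hmax' : ∀ a ∈ Icc s0 s1, ∀ b ∈ Icc 0 ρ, ∀ c ∈ Icc (-k) k,
      V a b c - W a b c ≤ V s' r' θ' - W s' r' θ' := fun a ha b hb c hc =>
    hmax (show (a, b, c) ∈ _ from ⟨ha, hb, hc⟩)
  by_contra hcon
  push Not at hcon
  have hpos : W s' r' θ' < V s' r' θ' := by linarith [hmax' s hs r hr θ hθ]
  have hnb : ¬ (s' = s0 ∨ r' = 0 ∨ r' = ρ ∨ θ' = -k ∨ θ' = k) := fun h => by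
    linarith [hbd s' hs' r' hr' θ' hθ' h]
  push Not at hnb
  obtain ⟨n1, n2, n3, n4, n5⟩ := hnb
  have is : s' ∈ Ioc s0 s1 := ⟨lt_of_le_of_ne hs'.1 n1.symm, hs'.2⟩
  have ir : r' ∈ Ioo 0 ρ := ⟨lt_of_le_of_ne hr'.1 n2.symm, lt_of_le_of_ne hr'.2 n3⟩
  have iθ : θ' ∈ Ioo (-k) k := ⟨lt_of_le_of_ne hθ'.1 n4.symm, lt_of_le_of_ne hθ'.2 n5⟩
  obtain ⟨a, b, c, d, jV, eV⟩ := hjV s' is r' ir θ' iθ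
  obtain ⟨a', b', c', d', jW, eW⟩ := hjW s' is r' ir θ' iθ
  obtain ⟨js, ⟨V1, h1, h2, h3⟩, ⟨V2, h4, h5⟩⟩ := jV.sub jW
  have tr : c - c' ≤ 0 ∧ b - b' = 0 := by
    have := second_deriv_nonpos h1 h2 (by
      filter_upwards [Icc_mem_nhds ir.1 ir.2] with y hy
      exact hmax' s' hs' y hy θ' hθ')
    rw [h3] at this
    exact ⟨this.2, this.1⟩
  have tθ : d - d' ≤ 0 := (second_deriv_nonpos h4 h5 (by
      filter_upwards [Icc_mem_nhds iθ.1 iθ.2] with y hy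
      exact hmax' s' hs' r' hr' y hy)).2
  have ts : 0 ≤ a - a' := by
    have ht := (hasDerivAt_iff_tendsto_slope.1 js).mono_left
      (nhdsWithin_mono s' (show Iio s' ⊆ {s'}ᶜ from fun y hy => ne_of_lt hy))
    refine ge_of_tendsto ht ?_
    filter_upwards [Ioo_mem_nhdsLT is.1] with y hy
    rw [slope_def_field]
    refine div_nonneg_of_nonpos ?_ (by linarith [hy.2])
    linarith [hmax' y ⟨hy.1.le, hy.2.le.trans hs'.2⟩ r' hr' θ' hθ']
  have hr2 : (d - d') / r' ^ 2 ≤ 0 := div_nonpos_of_nonpos_of_nonneg tθ (sq_nonneg _)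
  have hb : b = b' := by linarith [tr.2]
  rw [sub_div] at hr2
  subst hb
  linarith [tr.1]

/-- what a barrier should satisfy -/
def IsBarrier (k lam m : ℝ) (F : ℝ → ℝ → ℝ → ℝ) : Prop :=
  ContinuousOn (fun q : ℝ × ℝ × ℝ => F q.1 q.2.1 q.2.2)
      (Icc (-(1/4)) 0 ×ˢ (Icc 0 (1/2) ×ˢ Icc (-k) k)) ∧
  (∀ s ∈ Ioc (-(1/4):ℝ) 0, ∀ r ∈ Ioo (0:ℝ) (1/2), ∀ θ ∈ Ioo (-k) k,
      ∃ a b c d, PolarJet F s r θ a b c d ∧ c + b / r + d / r ^ 2 < a) ∧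
  (∀ s ∈ Icc (-(1/4):ℝ) 0, ∀ r ∈ Icc (0:ℝ) (1/2), ∀ θ ∈ Icc (-k) k, 0 ≤ F s r θ) ∧
  (∀ s ∈ Icc (-(1/4):ℝ) 0, ∀ r ∈ Icc (0:ℝ) (1/2), ∀ θ ∈ Icc (-k) k,
    (s = -(1/4) ∨ r = 1/2) → m ≤ F s r θ) ∧
  (∀ r ∈ Ioo (0:ℝ) (1/2), ∀ θ ∈ Icc (-k) k, F 0 r θ ≤ r ^ lam)

lemma cos_lower {k μ θ : ℝ} (hμ : 0 < μ) (hk : μ * k < Real.pi / 2)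
    (hθ : θ ∈ Icc (-k) k) : Real.cos (μ * k) ≤ Real.cos (μ * θ) := by
  rw [← Real.cos_abs (μ * θ)]
  have h1 : |μ * θ| ≤ μ * k := by
    rw [abs_mul, abs_of_pos hμ]
    exact mul_le_mul_of_nonneg_left (abs_le.2 hθ) hμ.le
  exact Real.cos_le_cos_of_nonneg_of_le_pi (abs_nonneg _) (by linarith [Real.pi_pos]) h1

lemma hasDerivAt_cosmul (A μ θ : ℝ) :
    HasDerivAt (fun y => A * Real.cos (μ * y)) (A * (-(μ * Real.sin (μ * θ)))) θ := by
  have := (((hasDerivAt_id θ).const_mul μ).cos).const_mul A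
  refine this.congr_deriv ?_
  simp only [id]; ring

lemma hasDerivAt_sinmul (A μ θ : ℝ) :
    HasDerivAt (fun y => A * (-(μ * Real.sin (μ * y)))) (-(μ ^ 2 * A * Real.cos (μ * θ))) θ := by
  have := ((((hasDerivAt_id θ).const_mul μ).sin).const_mul μ).neg.const_mul A
  refine this.congr_deriv ?_
  simp only [id]; ring

lemma barrier_small {k lam μ : ℝ} (hl0 : 0 < lam) (hl1 : lam ≤ 1)
    (hμ : lam < μ) (hk0 : 0 < k) (hk : μ * k < Real.pi / 2) :
    ∃ m F, 0 < m ∧ IsBarrier k lam m F := by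
  have hμ0 : 0 < μ := hl0.trans hμ
  set c0 := Real.cos (μ * k) with hc0
  have hc0p : 0 < c0 := Real.cos_pos_of_mem_Ioo
    ⟨by nlinarith [Real.pi_pos, mul_pos hμ0 hk0], hk⟩
  set e := (μ ^ 2 - lam ^ 2) * c0 / 2 with he
  have hD : 0 < μ ^ 2 - lam ^ 2 := by nlinarith
  have hep : 0 < e := by positivity
  refine ⟨min (e / 4) ((1/2) ^ lam * c0), fun s r θ => r ^ lam * Real.cos (μ * θ) - e * s,
    by positivity, ?_, ?_, ?_, ?_, ?_⟩
  · have h1 : Continuous (fun q : ℝ × ℝ × ℝ => q.2.1 ^ lam) :=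
      (Real.continuous_rpow_const hl0.le).comp (by fun_prop)
    exact Continuous.continuousOn (by fun_prop)
  · intro s hs r hr θ hθ
    refine ⟨-e, lam * r ^ (lam - 1) * Real.cos (μ * θ),
      lam * ((lam - 1) * r ^ (lam - 1 - 1)) * Real.cos (μ * θ),
      -(μ ^ 2 * r ^ lam * Real.cos (μ * θ)), ⟨?_, ?_, ?_⟩, ?_⟩
    · have := ((hasDerivAt_id s).const_mul e).const_sub (r ^ lam * Real.cos (μ * θ))
      simpa using this
    · refine ⟨fun r => lam * r ^ (lam - 1) * Real.cos (μ * θ), ?_, ?_, rfl⟩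
      · filter_upwards [Ioi_mem_nhds hr.1] with y hy
        exact (((Real.hasDerivAt_rpow_const (Or.inl (ne_of_gt hy))).mul_const _).sub_const _)
      · exact (((Real.hasDerivAt_rpow_const (Or.inl hr.1.ne')).const_mul lam).mul_const _)
    · refine ⟨fun y => r ^ lam * (-(μ * Real.sin (μ * y))), ?_, hasDerivAt_sinmul _ _ _⟩
      exact Eventually.of_forall fun y => (hasDerivAt_cosmul _ _ _).sub_const _
    · have hr0 := hr.1
      have e1 : r ^ (lam - 1) = r ^ (lam - 2) * r := by
        rw [← Real.rpow_add_one hr0.ne']; ring_nf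
      have e2 : r ^ lam = r ^ (lam - 2) * r ^ 2 := by
        rw [← Real.rpow_natCast, ← Real.rpow_add hr0]; norm_num
      have e3 : lam - 1 - 1 = lam - 2 := by ring
      rw [e3, e1, e2]
      have hge : 1 ≤ r ^ (lam - 2) :=
        Real.one_le_rpow_of_pos_of_le_one_of_nonpos hr0 (by linarith [hr.2]) (by linarith)
      have hcos := cos_lower hμ0 hk ⟨hθ.1.le, hθ.2.le⟩
      rw [← hc0] at hcos
      have : lam * ((lam - 1) * r ^ (lam - 2)) * Real.cos (μ * θ)
          + lam * (r ^ (lam - 2) * r) * Real.cos (μ * θ) / r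
          + -(μ ^ 2 * (r ^ (lam - 2) * r ^ 2) * Real.cos (μ * θ)) / r ^ 2
          = -((μ ^ 2 - lam ^ 2) * (r ^ (lam - 2) * Real.cos (μ * θ))) := by
        field_simp; ring
      rw [this]
      have h3 : c0 ≤ r ^ (lam - 2) * Real.cos (μ * θ) := by nlinarith
      have h4 := mul_le_mul_of_nonneg_left h3 hD.le
      have : 0 < (μ ^ 2 - lam ^ 2) * c0 := by positivity
      linarith
  · intro s hs r hr θ hθ
    have hcos := cos_lower hμ0 hk hθ
    have h1 : 0 ≤ r ^ lam * Real.cos (μ * θ) :=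
      mul_nonneg (Real.rpow_nonneg hr.1 _) (hc0p.le.trans hcos)
    have h2 : e * s ≤ 0 := mul_nonpos_of_nonneg_of_nonpos hep.le hs.2
    simp only; linarith
  · intro s hs r hr θ hθ h
    have hcos := cos_lower hμ0 hk hθ
    have h1 : 0 ≤ r ^ lam * Real.cos (μ * θ) :=
      mul_nonneg (Real.rpow_nonneg hr.1 _) (hc0p.le.trans hcos)
    have h2 : e * s ≤ 0 := mul_nonpos_of_nonneg_of_nonpos hep.le hs.2
    rcases h with h | h
    · refine (min_le_left _ _).trans ?_
      subst h; simp only; linarith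
    · refine (min_le_right _ _).trans ?_
      subst h
      have := mul_le_mul_of_nonneg_left hcos (Real.rpow_nonneg hr.1 lam)
      simp only; linarith
  · intro r hr θ hθ
    have := mul_le_mul_of_nonneg_left (Real.cos_le_one (μ * θ)) (Real.rpow_nonneg hr.1.le lam)
    simp only; linarith

lemma barrier_large {k lam μ : ℝ} (hl1 : 1 ≤ lam)
    (hμ : lam < μ) (hk0 : 0 < k) (hk : μ * k < Real.pi / 2) :
    ∃ m F, 0 < m ∧ IsBarrier k lam m F := by
  have hl0 : 0 < lam := by linarith
  have hμ0 : 0 < μ := hl0.trans hμ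
  set c0 := Real.cos (μ * k) with hc0
  have hc0p : 0 < c0 := Real.cos_pos_of_mem_Ioo
    ⟨by nlinarith [Real.pi_pos, mul_pos hμ0 hk0], hk⟩
  have hD : 0 < μ ^ 2 - lam ^ 2 := by nlinarith
  obtain ⟨p, hp⟩ : ∃ p, p = lam / 2 := ⟨_, rfl⟩
  have hp0 : 0 < p := by linarith
  obtain ⟨B, hB⟩ : ∃ B, B = (μ ^ 2 - lam ^ 2) / (2 * p) := ⟨_, rfl⟩
  have hB0 : 0 < B := by rw [hB]; positivity
  have hpB : 2 * (p * B) = μ ^ 2 - lam ^ 2 := by rw [hB]; field_simp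
  refine ⟨min ((B / 4) ^ p * c0) ((1/4) ^ p * c0),
    fun s r θ => (r ^ 2 - B * s) ^ p * Real.cos (μ * θ), by positivity, ?_, ?_, ?_, ?_, ?_⟩
  · have h1 : Continuous (fun q : ℝ × ℝ × ℝ => (q.2.1 ^ 2 - B * q.1) ^ p) :=
      (Real.continuous_rpow_const hp0.le).comp (by fun_prop)
    exact Continuous.continuousOn (by fun_prop)
  · intro s hs r hr θ hθ
    have hr0 := hr.1
    have hBs : 0 ≤ -(B * s) := by nlinarith [hs.2]
    have hu : ∀ y : ℝ, 0 < y → 0 < y ^ 2 - B * s := fun y hy => by nlinarith [pow_pos hy 2]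
    have hdu : ∀ y : ℝ, HasDerivAt (fun y => y ^ 2 - B * s) (2 * y) y := fun y => by
      simpa using (hasDerivAt_pow 2 y).sub_const (B * s)
    have hdp : ∀ (q y : ℝ), 0 < y →
        HasDerivAt (fun y => (y ^ 2 - B * s) ^ q) (2 * y * q * (y ^ 2 - B * s) ^ (q - 1)) y :=
      fun q y hy => (hdu y).rpow_const (Or.inl (hu y hy).ne')
    refine ⟨-B * p * (r ^ 2 - B * s) ^ (p - 1) * Real.cos (μ * θ),
      2 * r * p * (r ^ 2 - B * s) ^ (p - 1) * Real.cos (μ * θ),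
      (2 * p * (r ^ 2 - B * s) ^ (p - 1) +
        2 * r * p * (2 * r * (p - 1) * (r ^ 2 - B * s) ^ (p - 1 - 1))) * Real.cos (μ * θ),
      -(μ ^ 2 * (r ^ 2 - B * s) ^ p * Real.cos (μ * θ)), ⟨?_, ?_, ?_⟩, ?_⟩
    · have h1 : HasDerivAt (fun s => r ^ 2 - B * s) (-B) s := by
        simpa using ((hasDerivAt_id s).const_mul B).const_sub (r ^ 2)
      exact (h1.rpow_const (Or.inl (hu r hr0).ne')).mul_const _
    · refine ⟨fun r => 2 * r * p * (r ^ 2 - B * s) ^ (p - 1) * Real.cos (μ * θ), ?_, ?_, rfl⟩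
      · filter_upwards [Ioi_mem_nhds hr.1] with y hy
        exact (hdp p y hy).mul_const _
      · have h1 : HasDerivAt (fun r : ℝ => 2 * r * p) (2 * p) r := by
          simpa using ((hasDerivAt_id r).const_mul 2).mul_const p
        exact (h1.mul (hdp (p - 1) r hr0)).mul_const _
    · refine ⟨fun y => (r ^ 2 - B * s) ^ p * (-(μ * Real.sin (μ * y))), ?_,
        hasDerivAt_sinmul _ _ _⟩
      exact Eventually.of_forall fun y => hasDerivAt_cosmul _ _ _
    · have hcos := cos_lower hμ0 hk ⟨hθ.1.le, hθ.2.le⟩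
      rw [← hc0] at hcos
      have hu0 := hu r hr0
      have hru : r ^ 2 ≤ r ^ 2 - B * s := by linarith
      generalize r ^ 2 - B * s = u at hu0 hru ⊢
      have e1 : u ^ (p - 1) = u ^ (p - 2) * u := by
        rw [← Real.rpow_add_one hu0.ne']; ring_nf
      have e2 : u ^ p = u ^ (p - 2) * u ^ 2 := by
        rw [← Real.rpow_natCast, ← Real.rpow_add hu0]; norm_num
      have e3 : p - 1 - 1 = p - 2 := by ring
      rw [e3, e1, e2]
      have hX : 0 < u ^ (p - 2) := Real.rpow_pos_of_pos hu0 _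
      generalize u ^ (p - 2) = X at hX ⊢
      have hC : 0 < Real.cos (μ * θ) := hc0p.trans_le hcos
      generalize Real.cos (μ * θ) = C at hC ⊢
      rw [← sub_pos]
      have key : 0 < μ ^ 2 * u ^ 2 - (B * p + 4 * p) * u * r ^ 2
          - 4 * p * (p - 1) * (r ^ 2) ^ 2 := by
        have hlp : lam = 2 * p := by linarith
        have hr2 : 0 < r ^ 2 := by positivity
        generalize r ^ 2 = w at hru hr2 ⊢
        have hμ2 : μ ^ 2 = 4 * p ^ 2 + 2 * (p * B) := by rw [hpB, hlp]; ring
        rw [hμ2]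
        obtain ⟨z, hz⟩ : ∃ z, z = u - w := ⟨_, rfl⟩
        have hz0 : 0 ≤ z := by linarith
        have huz : u = w + z := by linarith
        rw [huz]
        have h2p : 0 ≤ 2 * p - 1 := by linarith
        have hid : (4 * p ^ 2 + 2 * (p * B)) * (w + z) ^ 2 - (B * p + 4 * p) * (w + z) * w
          - 4 * p * (p - 1) * w ^ 2 = p * B * w ^ 2 + p * B * (3 * w * z + 2 * z ^ 2)
            + 4 * p * (2 * p - 1) * w * z + 4 * p ^ 2 * z ^ 2 := by ring
        rw [hid]
        positivity
      have : -B * p * (X * u) * C - ((2 * p * (X * u) + 2 * r * p * (2 * r * (p - 1) * X)) * C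
          + 2 * r * p * (X * u) * C / r + -(μ ^ 2 * (X * u ^ 2) * C) / r ^ 2)
          = X * C / r ^ 2 * (μ ^ 2 * u ^ 2 - (B * p + 4 * p) * u * r ^ 2
          - 4 * p * (p - 1) * (r ^ 2) ^ 2) := by
        field_simp; ring
      rw [this]
      positivity
  · intro s hs r hr θ hθ
    have hcos := cos_lower hμ0 hk hθ
    have hBs : 0 ≤ -(B * s) := by nlinarith [hs.2]
    exact mul_nonneg (Real.rpow_nonneg (by nlinarith [sq_nonneg r]) _) (hc0p.le.trans hcos)
  · intro s hs r hr θ hθ h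
    have hcos := cos_lower hμ0 hk hθ
    have hBs : 0 ≤ -(B * s) := by nlinarith [hs.2]
    have hu0 : 0 ≤ r ^ 2 - B * s := by nlinarith [sq_nonneg r]
    rcases h with h | h
    · refine (min_le_left _ _).trans ?_
      refine mul_le_mul (Real.rpow_le_rpow (by positivity) ?_ hp0.le) hcos hc0p.le
        (Real.rpow_nonneg hu0 _)
      subst h; nlinarith [sq_nonneg r]
    · refine (min_le_right _ _).trans ?_
      refine mul_le_mul (Real.rpow_le_rpow (by positivity) ?_ hp0.le) hcos hc0p.le
        (Real.rpow_nonneg hu0 _)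
      subst h; nlinarith
  · intro r hr θ hθ
    have e : (r ^ 2 - B * 0) ^ p = r ^ lam := by
      rw [mul_zero, sub_zero, ← Real.rpow_natCast, ← Real.rpow_mul hr.1.le, hp]
      congr 1; push_cast; ring
    simp only
    rw [e]
    have := mul_le_mul_of_nonneg_left (Real.cos_le_one (μ * θ)) (Real.rpow_nonneg hr.1.le lam)
    linarith

lemma barrier_exists {κ lam : ℝ} (hκ0 : 0 < κ) (hl0 : 0 < lam) (hlam : lam < Real.pi / κ) :
    ∃ m F, 0 < m ∧ IsBarrier (κ / 2) lam m F := by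
  obtain ⟨μ, h1, h2⟩ := exists_between hlam
  have hk : μ * (κ / 2) < Real.pi / 2 := by
    rw [lt_div_iff₀ hκ0] at h2; linarith
  rcases le_total lam 1 with h | h
  · exact barrier_small hl0 h h1 (by linarith) hk
  · exact barrier_large h h1 (by linarith) hk

lemma hasDerivAt_polarPt_r (R r θ : ℝ) :
    HasDerivAt (fun y => polarPt (R * y) θ) (R • polarPt 1 θ) r := by
  unfold polarPt
  have h := ((hasDerivAt_id r).const_mul R)
  have := ((h.mul_const (Real.cos θ)).smul_const
      (EuclideanSpace.single (0 : Fin 2) (1:ℝ))).add ((h.mul_const (Real.sin θ)).smul_const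
      (EuclideanSpace.single (1 : Fin 2) (1:ℝ)))
  refine this.congr_deriv ?_
  simp [smul_add, smul_smul]

/-- angular unit vector -/
noncomputable def angPt (a θ : ℝ) : EuclideanSpace ℝ (Fin 2) :=
  (a * -Real.sin θ) • EuclideanSpace.single 0 1 + (a * Real.cos θ) • EuclideanSpace.single 1 1

lemma hasDerivAt_polarPt_θ (a θ : ℝ) :
    HasDerivAt (fun y => polarPt a y) (angPt a θ) θ := by
  unfold polarPt angPt
  exact (((Real.hasDerivAt_cos θ).const_mul a).smul_const _).add
    (((Real.hasDerivAt_sin θ).const_mul a).smul_const _)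

lemma hasDerivAt_angPt_θ (a θ : ℝ) :
    HasDerivAt (fun y => angPt a y) (-polarPt a θ) θ := by
  have := (((Real.hasDerivAt_sin θ).neg.const_mul a).smul_const
      (EuclideanSpace.single (0 : Fin 2) (1:ℝ))).add
    (((Real.hasDerivAt_cos θ).const_mul a).smul_const (EuclideanSpace.single (1 : Fin 2) (1:ℝ)))
  unfold angPt
  refine this.congr_deriv ?_
  unfold polarPt
  simp [add_comm]

lemma polarPt_smul (a θ : ℝ) : polarPt a θ = a • polarPt 1 θ := by
  simp [polarPt, smul_smul]

lemma angPt_smul (a θ : ℝ) : angPt a θ = a • angPt 1 θ := by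
  simp [angPt, smul_smul]

lemma trace_polar (g' : EuclideanSpace ℝ (Fin 2) →L[ℝ] EuclideanSpace ℝ (Fin 2) →L[ℝ] ℝ) (θ : ℝ) :
    ∑ i : Fin 2, g' (EuclideanSpace.single i 1) (EuclideanSpace.single i 1)
      = g' (polarPt 1 θ) (polarPt 1 θ) + g' (angPt 1 θ) (angPt 1 θ) := by
  rw [Fin.sum_univ_two]
  simp only [polarPt, angPt, map_add, map_smul, _root_.add_apply,
    _root_.smul_apply, smul_eq_mul, one_mul]
  have := Real.sin_sq_add_cos_sq θ
  have h : Real.cos θ ^ 2 = 1 - Real.sin θ ^ 2 := by linarith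
  ring_nf
  rw [h]
  ring

lemma hasDerivAt_clm_path {E : Type*} [NormedAddCommGroup E] [NormedSpace ℝ E]
    {g : E → (E →L[ℝ] ℝ)} {g' : E →L[ℝ] E →L[ℝ] ℝ} {γ w : ℝ → E} {γ' w' : E} {x : ℝ}
    (hg : HasFDerivAt g g' (γ x)) (hγ : HasDerivAt γ γ' x) (hw : HasDerivAt w w' x) :
    HasDerivAt (fun y => g (γ y) (w y)) (g' γ' (w x) + g (γ x) w') x := by
  have h : HasDerivAt (fun y => g (γ y)) (g' γ') x := hg.comp_hasDerivAt x hγ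
  exact h.clm_apply hw

lemma polar_jet_of_heat {κ R t₀ t : ℝ} (hR : 0 < R)
    {v : ℝ → EuclideanSpace ℝ (Fin 2) → ℝ}
    (hb : ∀ t ∈ Set.Ioc (t₀ - R ^ 2) t₀, ∀ x ∈ wedge κ ∩ Metric.ball 0 R,
          ∃ vt : ℝ, HasDerivAt (fun s => v s x) vt t ∧
            ∃ g : EuclideanSpace ℝ (Fin 2) → (EuclideanSpace ℝ (Fin 2) →L[ℝ] ℝ),
              (∀ y ∈ wedge κ ∩ Metric.ball 0 R, HasFDerivAt (v t) (g y) y) ∧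
              ∃ g' : EuclideanSpace ℝ (Fin 2) →L[ℝ] EuclideanSpace ℝ (Fin 2) →L[ℝ] ℝ,
                HasFDerivAt g g' x ∧
                vt = ∑ i : Fin 2,
                  g' (EuclideanSpace.single i 1) (EuclideanSpace.single i 1))
    {s r θ : ℝ} (hs : t + R ^ 2 * s ∈ Ioc (t₀ - R ^ 2) t₀) (hr : r ∈ Ioo (0:ℝ) 1)
    (hθ : θ ∈ Ioo (-(κ / 2)) (κ / 2)) :
    ∃ a b c d, PolarJet (fun s r θ => v (t + R ^ 2 * s) (polarPt (R * r) θ)) s r θ a b c d ∧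
      a = c + b / r + d / r ^ 2 := by
  have hmem : ∀ y ∈ Ioo (0:ℝ) 1, ∀ η ∈ Ioo (-(κ / 2)) (κ / 2),
      polarPt (R * y) η ∈ wedge κ ∩ Metric.ball 0 R := by
    intro y hy η hη
    have : 0 < R * y := mul_pos hR hy.1
    refine ⟨polarPt_mem_wedge this hη.1 hη.2, ?_⟩
    rw [mem_ball_zero_iff, norm_polarPt _ _ this.le]
    nlinarith [hy.2]
  obtain ⟨vt, h1, g, h2, g', h3, h4⟩ := hb _ hs _ (hmem r hr θ hθ)
  refine ⟨R ^ 2 * vt, R * g (polarPt (R * r) θ) (polarPt 1 θ),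
    R ^ 2 * g' (polarPt 1 θ) (polarPt 1 θ),
    (R * r) ^ 2 * g' (angPt 1 θ) (angPt 1 θ) - R * r * g (polarPt (R * r) θ) (polarPt 1 θ),
    ⟨?_, ?_, ?_⟩, ?_⟩
  · have hl : HasDerivAt (fun s => t + R ^ 2 * s) (R ^ 2) s := by
      simpa using ((hasDerivAt_id s).const_mul (R ^ 2)).const_add t
    have := HasDerivAt.comp s h1 hl
    exact this.congr_deriv (mul_comm _ _)
  · refine ⟨fun r => R * g (polarPt (R * r) θ) (polarPt 1 θ), ?_, ?_, rfl⟩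
    · filter_upwards [Ioo_mem_nhds hr.1 hr.2] with y hy
      have := (h2 _ (hmem y hy θ hθ)).comp_hasDerivAt y (hasDerivAt_polarPt_r R y θ)
      refine this.congr_deriv ?_
      rw [map_smul, smul_eq_mul]
    · have := (hasDerivAt_clm_path (γ := fun y => polarPt (R * y) θ) h3 (hasDerivAt_polarPt_r R r θ)
        (hasDerivAt_const r (polarPt 1 θ))).const_mul R
      refine this.congr_deriv ?_
      rw [map_smul, map_zero, _root_.smul_apply, smul_eq_mul]; ring
  · refine ⟨fun η => g (polarPt (R * r) η) (angPt (R * r) η), ?_, ?_⟩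
    · filter_upwards [Ioo_mem_nhds hθ.1 hθ.2] with y hy
      exact (h2 _ (hmem r hr y hy)).comp_hasDerivAt y (hasDerivAt_polarPt_θ (R * r) y)
    · have := hasDerivAt_clm_path h3 (hasDerivAt_polarPt_θ (R * r) θ)
        (hasDerivAt_angPt_θ (R * r) θ)
      refine this.congr_deriv ?_
      have e1 : g (polarPt (R * r) θ) (polarPt (R * r) θ)
          = (R * r) * g (polarPt (R * r) θ) (polarPt 1 θ) := by
        generalize g (polarPt (R * r) θ) = G
        rw [polarPt_smul, map_smul, smul_eq_mul]
      have e2 : g' (angPt (R * r) θ) (angPt (R * r) θ)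
          = (R * r) ^ 2 * g' (angPt 1 θ) (angPt 1 θ) := by
        simp only [angPt_smul (R * r) θ, map_smul, _root_.smul_apply, smul_eq_mul]; ring
      rw [map_neg, e1, e2]; ring
  · rw [h4, trace_polar g' θ]
    have := hr.1.ne'
    field_simp
    ring

/-- **boundary decay of caloric functions on planar wedges.**
Let `κ ∈ (0, 2π)`, `D = D^(κ)` and `0 < λ < π/κ`. Then there is `K₀ = K₀(κ, λ) > 0` such
that for every `R > 0`, `t₀ ∈ ℝ` and `v` satisfying: (a) `v` is continuous on
`(t₀−R², t₀] × (cl D ∩ B_R)`; (b) on `(t₀−R², t₀] × (D ∩ B_R)` the time derivative and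
spatial second derivatives of `v` exist and `∂ₜ v = Δₓ v`; (c) `v = 0` on
`(t₀−R², t₀] × (∂D ∩ B_R)`; (d) for every `r ∈ (0,R)`,
`sup_{t ∈ (t₀−r², t₀]} ∫_{D∩B_r} v² dx < ∞` and `∫∫ |∇ₓ v|² < ∞`; it holds that
`|v(t,x)| ≤ K₀ (|x|/R)^λ sup_{(t₀−9R²/16, t₀] × (D ∩ B_{3R/4})} |v|` for all
`(t,x) ∈ (t₀−R²/4, t₀] × (D ∩ B_{R/2})` (the supremum being encoded via an arbitrary
upper bound `S`, so that an infinite supremum makes the claim trivial). -/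
theorem stmt_12 (κ : ℝ) (hκ0 : 0 < κ) (hκ2 : κ < 2 * Real.pi)
    (lam : ℝ) (hlam0 : 0 < lam) (hlam : lam < Real.pi / κ) :
    ∃ K₀ : ℝ, 0 < K₀ ∧
      ∀ (R t₀ : ℝ), 0 < R → ∀ v : ℝ → EuclideanSpace ℝ (Fin 2) → ℝ,
        -- (a) continuity
        ContinuousOn (fun q : ℝ × EuclideanSpace ℝ (Fin 2) => v q.1 q.2)
          (Set.Ioc (t₀ - R ^ 2) t₀ ×ˢ (closure (wedge κ) ∩ Metric.ball 0 R)) →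
        -- (b) the heat equation `∂ₜ v = Δₓ v` pointwise in `(t₀−R², t₀] × (D ∩ B_R)`
        (∀ t ∈ Set.Ioc (t₀ - R ^ 2) t₀, ∀ x ∈ wedge κ ∩ Metric.ball 0 R,
          ∃ vt : ℝ, HasDerivAt (fun s => v s x) vt t ∧
            ∃ g : EuclideanSpace ℝ (Fin 2) → (EuclideanSpace ℝ (Fin 2) →L[ℝ] ℝ),
              (∀ y ∈ wedge κ ∩ Metric.ball 0 R, HasFDerivAt (v t) (g y) y) ∧
              ∃ g' : EuclideanSpace ℝ (Fin 2) →L[ℝ] EuclideanSpace ℝ (Fin 2) →L[ℝ] ℝ,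
                HasFDerivAt g g' x ∧
                vt = ∑ i : Fin 2,
                  g' (EuclideanSpace.single i 1) (EuclideanSpace.single i 1)) →
        -- (c) vanishing on the lateral boundary
        (∀ t ∈ Set.Ioc (t₀ - R ^ 2) t₀, ∀ x ∈ frontier (wedge κ) ∩ Metric.ball 0 R,
          v t x = 0) →
        -- (d) local energy finiteness
        (∀ r : ℝ, 0 < r → r < R →
          (∃ Cr : ℝ, ∀ t ∈ Set.Ioc (t₀ - r ^ 2) t₀,
            (∫⁻ x in wedge κ ∩ Metric.ball 0 r, ENNReal.ofReal (v t x ^ 2)) ≤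
              ENNReal.ofReal Cr) ∧
          (∫⁻ t in Set.Ioc (t₀ - r ^ 2) t₀, ∫⁻ x in wedge κ ∩ Metric.ball 0 r,
              ENNReal.ofReal (‖fderiv ℝ (v t) x‖ ^ 2)) < ⊤) →
        -- conclusion
        ∀ t ∈ Set.Ioc (t₀ - R ^ 2 / 4) t₀, ∀ x ∈ wedge κ ∩ Metric.ball 0 (R / 2),
          ∀ S : ℝ,
            (∀ s ∈ Set.Ioc (t₀ - 9 * R ^ 2 / 16) t₀,
              ∀ y ∈ wedge κ ∩ Metric.ball 0 (3 * R / 4), |v s y| ≤ S) →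
            |v t x| ≤ K₀ * (‖x‖ / R) ^ lam * S := by
  obtain ⟨m, F, hm, hFc, hFj, hF0, hFm, hFr⟩ := barrier_exists hκ0 hlam0 hlam
  refine ⟨1 / m, by positivity, ?_⟩
  intro R t₀ hR v ha hb hc _ t ht x hx S hS
  have hR2 : 0 < R ^ 2 := by positivity
  have hvS : |v t x| ≤ S := hS t ⟨by linarith [ht.1], ht.2⟩ x ⟨hx.1, by
    have := hx.2
    rw [mem_ball_zero_iff] at this ⊢
    linarith⟩
  have hS0 : 0 ≤ S := (abs_nonneg _).trans hvS
  rcases hS0.eq_or_lt with hS0 | hSpos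
  · subst hS0; simpa using hvS
  obtain ⟨⟨ρ, η, hρ, hη1, hη2, ex0, ex1⟩, hxb⟩ := hx
  have hxe : x = polarPt ρ η := by
    ext i
    fin_cases i
    · simpa [polarPt_zero] using ex0
    · simpa [polarPt_one] using ex1
  have hnx : ‖x‖ = ρ := by rw [hxe, norm_polarPt _ _ hρ.le]
  rw [mem_ball_zero_iff, hnx] at hxb
  obtain ⟨r, hrdef⟩ : ∃ r, r = ρ / R := ⟨_, rfl⟩
  have hρr : ρ = R * r := by rw [hrdef]; field_simp
  have hr0 : 0 < r := by rw [hrdef]; positivity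
  have hr1 : r < 1 / 2 := by rw [hrdef, div_lt_iff₀ hR]; linarith
  have htime : ∀ s ∈ Icc (-(1/4):ℝ) 0, t + R ^ 2 * s ∈ Ioc (t₀ - R ^ 2 / 2) t₀ := by
    intro s hs
    constructor
    · nlinarith [hs.1, ht.1]
    · nlinarith [hs.2, ht.2]
  have hball : ∀ y ∈ Icc (0:ℝ) (1/2), ∀ θ, ‖polarPt (R * y) θ‖ ≤ R / 2 := by
    intro y hy θ
    rw [norm_polarPt _ _ (mul_nonneg hR.le hy.1)]
    nlinarith [hy.2]
  set V : ℝ → ℝ → ℝ → ℝ := fun s r θ => v (t + R ^ 2 * s) (polarPt (R * r) θ) with hVdef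
  have hVc : ContinuousOn (fun q : ℝ × ℝ × ℝ => V q.1 q.2.1 q.2.2)
      (Icc (-(1/4)) 0 ×ˢ (Icc 0 (1/2) ×ˢ Icc (-(κ/2)) (κ/2))) := by
    have hmap : Continuous (fun q : ℝ × ℝ × ℝ =>
        ((t + R ^ 2 * q.1, polarPt (R * q.2.1) q.2.2) : ℝ × EuclideanSpace ℝ (Fin 2))) := by
      unfold polarPt; fun_prop
    refine ha.comp hmap.continuousOn ?_
    rintro ⟨s, y, θ⟩ ⟨hs, hy, hθ⟩
    simp only at hs hy hθ
    have h1 := htime s hs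
    refine ⟨⟨by linarith [h1.1], h1.2⟩,
      polarPt_mem_closure hκ0 (mul_nonneg hR.le hy.1) hθ.1 hθ.2, ?_⟩
    rw [mem_ball_zero_iff]
    linarith [hball y hy θ]
  have hVj : ∀ s ∈ Ioc (-(1/4):ℝ) 0, ∀ r ∈ Ioo (0:ℝ) (1/2), ∀ θ ∈ Ioo (-(κ/2)) (κ/2),
      ∃ a b c d, PolarJet V s r θ a b c d ∧ a = c + b / r + d / r ^ 2 := by
    intro s hs y hy θ hθ
    have h1 := htime s ⟨hs.1.le, hs.2⟩
    exact polar_jet_of_heat hR hb ⟨by linarith [h1.1], h1.2⟩ ⟨hy.1, by linarith [hy.2]⟩ hθ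
  have hVz : ∀ s ∈ Icc (-(1/4):ℝ) 0, ∀ r ∈ Icc (0:ℝ) (1/2), ∀ θ ∈ Icc (-(κ/2)) (κ/2),
      (r = 0 ∨ θ = -(κ/2) ∨ θ = κ/2) → V s r θ = 0 := by
    intro s hs y hy θ hθ h
    have h1 := htime s hs
    refine hc _ ⟨by linarith [h1.1], h1.2⟩ _ ⟨polarPt_mem_frontier hκ0 hκ2
      (mul_nonneg hR.le hy.1) hθ.1 hθ.2 ?_, ?_⟩
    · rcases h with h | h | h
      · left; rw [h, mul_zero]
      · right; left; exact h
      · right; right; exact h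
    · rw [mem_ball_zero_iff]
      linarith [hball y hy θ]
  have hVS : ∀ s ∈ Icc (-(1/4):ℝ) 0, ∀ r ∈ Icc (0:ℝ) (1/2), ∀ θ ∈ Icc (-(κ/2)) (κ/2),
      |V s r θ| ≤ S := by
    intro s hs y hy θ hθ
    by_cases h : y = 0 ∨ θ = -(κ/2) ∨ θ = κ/2
    · rw [hVz s hs y hy θ hθ h, abs_zero]; exact hS0
    · push Not at h
      have h1 := htime s hs
      refine hS _ ⟨by linarith [h1.1], h1.2⟩ _ ⟨polarPt_mem_wedge
        (mul_pos hR (lt_of_le_of_ne hy.1 h.1.symm)) (lt_of_le_of_ne hθ.1 h.2.1.symm)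
        (lt_of_le_of_ne hθ.2 h.2.2), ?_⟩
      rw [mem_ball_zero_iff]
      linarith [hball y hy θ]
  have hcomp : ∀ σ : ℝ, |σ| = 1 → σ * V 0 r η ≤ S / m * F 0 r η := by
    intro σ hσ
    have habs : ∀ z, σ * z ≤ |z| := fun z => by
      calc σ * z ≤ |σ * z| := le_abs_self _
        _ = |z| := by rw [abs_mul, hσ, one_mul]
    have hSm : 0 < S / m := by positivity
    refine polar_comparison (-(1/4)) 0 (1/2) (κ/2) (fun s r θ => σ * V s r θ)
      (fun s r θ => S / m * F s r θ) (continuousOn_const.mul hVc) (continuousOn_const.mul hFc)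
      ?_ ?_ ?_ 0 ⟨by norm_num, le_refl _⟩ r ⟨hr0.le, hr1.le⟩ η ⟨hη1.le, hη2.le⟩
    · intro s hs y hy θ hθ h
      by_cases h' : y = 0 ∨ θ = -(κ/2) ∨ θ = κ/2
      · rw [hVz s hs y hy θ hθ h', mul_zero]
        exact mul_nonneg hSm.le (hF0 s hs y hy θ hθ)
      · have h2 : m ≤ F s y θ := hFm s hs y hy θ hθ (by tauto)
        calc σ * V s y θ ≤ S := (habs _).trans (hVS s hs y hy θ hθ)
          _ = S / m * m := by field_simp
          _ ≤ S / m * F s y θ := mul_le_mul_of_nonneg_left h2 hSm.le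
    · intro s hs y hy θ hθ
      obtain ⟨a, b, c, d, hj, he⟩ := hVj s hs y hy θ hθ
      exact ⟨_, _, _, _, hj.const_mul σ, by rw [he]; ring⟩
    · intro s hs y hy θ hθ
      obtain ⟨a, b, c, d, hj, he⟩ := hFj s hs y hy θ hθ
      refine ⟨_, _, _, _, hj.const_mul (S / m), ?_⟩
      have := mul_lt_mul_of_pos_left he hSm
      refine lt_of_eq_of_lt ?_ this
      ring
  have hVx : V 0 r η = v t x := by
    simp only [hVdef]
    rw [mul_zero, add_zero, ← hρr, ← hxe]
  have hup := hcomp 1 (by norm_num)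
  have hlo := hcomp (-1) (by norm_num)
  rw [hVx] at hup hlo
  have hF := mul_le_mul_of_nonneg_left (hFr r ⟨hr0, hr1⟩ η ⟨hη1.le, hη2.le⟩)
    (show 0 ≤ S / m by positivity)
  rw [hnx, ← hrdef]
  have e : 1 / m * r ^ lam * S = S / m * r ^ lam := by ring
  rw [e, abs_le]
  constructor <;> linarith
end
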